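/- arXiv:2305.08536 — 8 statements merged into one kernel-verified Lean document; each statement's English description precedes it below -/
import Mathlib

section
/- Let J ∈ ℝ^{n×n} be symmetric with zero diagonal, μ ≥ 0, and L(θ) = −∑_{1≤i<j≤n} J_{ij} cos(θ_i − θ_j) + (μ/2) ∑_{i=1}^n sin²θ_i. If θ: ℝ → ℝ^n is differentiable and satisfies the oscillator-based Ising machine dynamics θ̇_i(t) = −∑_{j ≠ i} J_{ij} sin(θ_i(t) − θ_j(t)) − (μ/2) sin(2θ_i(t)) for all i and t, then for all t, (d/dt) L(θ(t)) = −∑_{i=1}^n θ̇_i(t)² ≤ 0; that is, L is a Lyapunov function for the dynamics. -/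
open Finset Real

theorem antisymm_pair_sum (n : ℕ) (f : Fin n → Fin n → ℝ) (v : Fin n → ℝ)
    (hf : ∀ i j, f i j = -f j i) :
    (∑ i : Fin n, ∑ j : Fin n, if i < j then f i j * (v i - v j) else 0)
      = ∑ i : Fin n, ∑ j : Fin n, f i j * v i := by
  have h1 : (∑ i : Fin n, ∑ j : Fin n, if i < j then f i j * (v i - v j) else 0)
      = (∑ i : Fin n, ∑ j : Fin n, if i < j then f i j * v i else 0)
        - ∑ i : Fin n, ∑ j : Fin n, if i < j then f i j * v j else 0 := by
    simp only [← Finset.sum_sub_distrib]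
    refine Finset.sum_congr rfl fun i _ => Finset.sum_congr rfl fun j _ => ?_
    split_ifs <;> ring
  rw [h1, Finset.sum_comm (f := fun i j => if i < j then f i j * v j else 0)]
  simp only [← Finset.sum_sub_distrib]
  refine Finset.sum_congr rfl fun i _ => Finset.sum_congr rfl fun j _ => ?_
  rcases lt_trichotomy i j with h | h | h
  · simp [h, h.not_gt]
  · subst h
    have h0 : f i i = 0 := by linarith [hf i i]
    simp [h0]
  · simp [h, h.not_gt, hf i j]

/-- Along any solution of the oscillator-based Ising machine dynamics
`θ̇_i = -∑_{j≠i} J_ij sin(θ_i - θ_j) - (μ/2) sin(2θ_i)`, the penalized objective `L`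
decreases: `(d/dt) L(θ(t)) = -∑_i θ̇_i(t)² ≤ 0`, i.e. `L` is a Lyapunov function. -/
theorem penalized_objective_is_lyapunov
    (n : ℕ) (J : Fin n → Fin n → ℝ)
    (hsym : ∀ i j, J i j = J j i) (hdiag : ∀ i, J i i = 0)
    (μ : ℝ) (hμ : 0 ≤ μ)
    (L : (Fin n → ℝ) → ℝ)
    (hL : ∀ θ : Fin n → ℝ,
      L θ = -(∑ i : Fin n, ∑ j : Fin n, if i < j then J i j * Real.cos (θ i - θ j) else 0)
        + μ / 2 * ∑ i : Fin n, Real.sin (θ i) ^ 2)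
    (θ : ℝ → Fin n → ℝ) (hθ : ∀ i, Differentiable ℝ fun t => θ t i)
    (hdyn : ∀ (t : ℝ) (i : Fin n), deriv (fun s => θ s i) t
        = -(∑ j ∈ Finset.univ.filter (fun j => j ≠ i), J i j * Real.sin (θ t i - θ t j))
          - μ / 2 * Real.sin (2 * θ t i)) :
    ∀ t : ℝ,
      HasDerivAt (fun s => L (θ s)) (-∑ i : Fin n, (deriv (fun s => θ s i) t) ^ 2) t
      ∧ -∑ i : Fin n, (deriv (fun s => θ s i) t) ^ 2 ≤ 0 := by
  intro t
  refine ⟨?_, neg_nonpos.mpr (Finset.sum_nonneg fun i _ => sq_nonneg _)⟩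
  have hv : ∀ i, HasDerivAt (fun s => θ s i) (deriv (fun s => θ s i) t) t :=
    fun i => (hθ i t).hasDerivAt
  have hdyn' : ∀ i, deriv (fun s => θ s i) t
      = -(∑ j, J i j * Real.sin (θ t i - θ t j)) - μ / 2 * Real.sin (2 * θ t i) := by
    intro i
    rw [hdyn t i, Finset.sum_filter]
    congr 2
    refine Finset.sum_congr rfl fun j _ => ?_
    by_cases h : j = i
    · subst h; simp
    · simp [h]
  generalize hvdef : (fun i => deriv (fun s => θ s i) t) = v at *
  have hvi : ∀ i, deriv (fun s => θ s i) t = v i := fun i => congrFun hvdef i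
  simp only [hvi] at hv hdyn' ⊢
  have hLf : (fun s => L (θ s)) = fun s =>
      -(∑ i : Fin n, ∑ j : Fin n, if i < j then J i j * Real.cos (θ s i - θ s j) else 0)
        + μ / 2 * ∑ i : Fin n, Real.sin (θ s i) ^ 2 := funext fun s => hL (θ s)
  rw [hLf]
  have hpair : HasDerivAt
      (fun s => ∑ i : Fin n, ∑ j : Fin n, if i < j then J i j * Real.cos (θ s i - θ s j) else 0)
      (∑ i : Fin n, ∑ j : Fin n,
        if i < j then J i j * (-Real.sin (θ t i - θ t j) * (v i - v j)) else 0) t := by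
    refine HasDerivAt.fun_sum fun i _ => HasDerivAt.fun_sum fun j _ => ?_
    split_ifs
    · exact (((hv i).sub (hv j)).cos).const_mul (J i j)
    · exact hasDerivAt_const t 0
  have hsin : HasDerivAt (fun s => ∑ i : Fin n, Real.sin (θ s i) ^ 2)
      (∑ i : Fin n, Real.sin (2 * θ t i) * v i) t := by
    refine HasDerivAt.fun_sum fun i _ => ?_
    refine ((hv i).sin.pow 2).congr_deriv ?_
    rw [Real.sin_two_mul]
    push_cast
    ring
  refine (hpair.neg.add (hsin.const_mul (μ / 2))).congr_deriv ?_
  have key := antisymm_pair_sum n (fun i j => J i j * Real.sin (θ t i - θ t j)) v (by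
    intro i j
    show J i j * Real.sin (θ t i - θ t j) = -(J j i * Real.sin (θ t j - θ t i))
    rw [hsym i j, ← neg_sub (θ t j), Real.sin_neg]
    ring)
  have h2 : -(∑ i : Fin n, ∑ j : Fin n,
        if i < j then J i j * (-Real.sin (θ t i - θ t j) * (v i - v j)) else 0)
      = ∑ i : Fin n, ∑ j : Fin n,
        if i < j then J i j * Real.sin (θ t i - θ t j) * (v i - v j) else 0 := by
    simp only [← Finset.sum_neg_distrib]
    refine Finset.sum_congr rfl fun i _ => Finset.sum_congr rfl fun j _ => ?_
    split_ifs <;> ring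
  rw [h2, key, Finset.mul_sum, ← Finset.sum_add_distrib, ← Finset.sum_neg_distrib]
  refine Finset.sum_congr rfl fun i _ => ?_
  rw [← Finset.sum_mul]
  linear_combination (v i) * hdyn' i
end

section
/- Let θ_i, θ_j ∈ ℝ and let ν be the uniform probability measure on the interval [0, 2π). Then ν({φ ∈ [0, 2π) : cos(θ_i − φ) · cos(θ_j − φ) < 0}) = |θ_i − θ_j|_{S¹} / π. (This is the probability that a line through the origin with uniformly random normal direction separates the unit vectors (cos θ_i, sin θ_i) and (cos θ_j, sin θ_j).) -/
open Real MeasureTheory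

/-- The circle distance `|x|_{S¹} = min_{k ∈ ℤ} |x - 2πk| ∈ [0, π]`. -/
noncomputable def circleDist (x : ℝ) : ℝ := ⨅ k : ℤ, |x - 2 * Real.pi * k|

lemma circleDist_aux (x d : ℝ) (n : ℤ) (hx : x = d + 2 * Real.pi * n) (h : |d| ≤ Real.pi) :
    circleDist x = |d| := by
  have hp := Real.pi_pos
  unfold circleDist
  apply le_antisymm
  · have hb : BddBelow (Set.range fun k : ℤ => |x - 2 * Real.pi * k|) :=
      ⟨0, by rintro _ ⟨k, rfl⟩; exact abs_nonneg _⟩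
    refine (ciInf_le hb n).trans (le_of_eq ?_)
    rw [hx]; congr 1; ring
  · refine le_ciInf fun k => ?_
    have e : x - 2 * Real.pi * k = d + 2 * Real.pi * ((n - k : ℤ) : ℝ) := by
      rw [hx]; push_cast; ring
    rw [e]
    obtain ⟨h1, h2⟩ := abs_le.1 h
    rcases lt_trichotomy (n - k) 0 with hm | hm | hm
    · have : ((n - k : ℤ) : ℝ) ≤ -1 := by exact_mod_cast (by omega : n - k ≤ -1)
      have : d + 2 * Real.pi * ((n - k : ℤ) : ℝ) ≤ -Real.pi := by nlinarith
      exact h.trans (by rw [le_abs]; right; linarith)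
    · rw [hm]; simp
    · have : (1 : ℝ) ≤ ((n - k : ℤ) : ℝ) := by exact_mod_cast (by omega : 1 ≤ n - k)
      have : Real.pi ≤ d + 2 * Real.pi * ((n - k : ℤ) : ℝ) := by nlinarith
      exact h.trans (by rw [le_abs]; left; linarith)

lemma volume_shift (S : Set ℝ) (hS : MeasurableSet S)
    (hper : ∀ x, x + 2 * Real.pi ∈ S ↔ x ∈ S) (a : ℝ) :
    volume.real (S ∩ Set.Ico 0 (2 * Real.pi)) =
      volume.real (S ∩ Set.Ioc a (a + 2 * Real.pi)) := by
  have hp := Real.pi_pos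
  have hf : Function.Periodic (S.indicator (fun _ => (1 : ℝ))) (2 * Real.pi) := by
    intro x
    by_cases hx : x ∈ S
    · rw [Set.indicator_of_mem hx, Set.indicator_of_mem ((hper x).2 hx)]
    · rw [Set.indicator_of_notMem hx, Set.indicator_of_notMem (fun h => hx ((hper x).1 h))]
  have key : ∀ c : ℝ, ∫ x in c..(c + 2 * Real.pi), S.indicator (fun _ => (1 : ℝ)) x
      = volume.real (S ∩ Set.Ioc c (c + 2 * Real.pi)) := by
    intro c
    rw [intervalIntegral.integral_of_le (by linarith), integral_indicator hS]
    simp [Measure.restrict_restrict hS]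
  rw [← key, hf.intervalIntegral_add_eq a 0, key, zero_add]
  apply measureReal_congr
  exact (Filter.EventuallyEq.refl _ S).inter Ico_ae_eq_Ioc

lemma sep_aux (b d : ℝ) (h0 : 0 ≤ d) (h1 : d ≤ Real.pi) :
    volume.real {φ : ℝ | φ ∈ Set.Ico 0 (2 * Real.pi) ∧
      Real.cos (b + d - φ) * Real.cos (b - φ) < 0} = 2 * d := by
  have hp := Real.pi_pos
  have e : {φ : ℝ | φ ∈ Set.Ico 0 (2 * Real.pi) ∧
      Real.cos (b + d - φ) * Real.cos (b - φ) < 0} =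
      {φ : ℝ | Real.cos (b + d - φ) * Real.cos (b - φ) < 0} ∩ Set.Ico 0 (2 * Real.pi) := by
    ext x; exact and_comm
  rw [e, volume_shift _ _ _ (b - Real.pi / 2)]
  · have e2 : {φ : ℝ | Real.cos (b + d - φ) * Real.cos (b - φ) < 0} ∩
        Set.Ioc (b - Real.pi / 2) (b - Real.pi / 2 + 2 * Real.pi) =
        Set.Ioo (b - Real.pi / 2) (b + d - Real.pi / 2) ∪
        Set.Ioo (b + Real.pi / 2) (b + d + Real.pi / 2) := by
      ext x
      simp only [Set.mem_inter_iff, Set.mem_ofPred_eq, Set.mem_Ioc, Set.mem_union, Set.mem_Ioo]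
      rw [← Real.cos_neg (b + d - x), ← Real.cos_neg (b - x)]
      constructor
      · rintro ⟨h, h2, h3⟩
        by_contra hc
        push Not at hc
        obtain ⟨c1, c2⟩ := hc
        have c1 := c1 h2
        apply absurd h; rw [not_lt]
        rcases le_or_gt x (b + Real.pi / 2) with hx | hx
        · exact mul_nonneg (Real.cos_nonneg_of_neg_pi_div_two_le_of_le (by linarith) (by linarith))
            (Real.cos_nonneg_of_neg_pi_div_two_le_of_le (by linarith) (by linarith))
        · have c2 := c2 hx
          exact mul_nonneg_of_nonpos_of_nonpos
            (Real.cos_nonpos_of_pi_div_two_le_of_le (by linarith) (by linarith))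
            (Real.cos_nonpos_of_pi_div_two_le_of_le (by linarith) (by linarith))
      · rintro (⟨h2, h3⟩ | ⟨h2, h3⟩)
        · refine ⟨mul_neg_of_neg_of_pos ?_ ?_, by linarith, by linarith⟩
          · rw [← Real.cos_neg]
            exact Real.cos_neg_of_pi_div_two_lt_of_lt (by linarith) (by linarith)
          · exact Real.cos_pos_of_mem_Ioo ⟨by linarith, by linarith⟩
        · refine ⟨mul_neg_of_pos_of_neg ?_ ?_, by linarith, by linarith⟩
          · exact Real.cos_pos_of_mem_Ioo ⟨by linarith, by linarith⟩
          · exact Real.cos_neg_of_pi_div_two_lt_of_lt (by linarith) (by linarith)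
    rw [e2, measureReal_union _ measurableSet_Ioo measure_Ioo_lt_top.ne measure_Ioo_lt_top.ne, Real.volume_real_Ioo_of_le (by linarith),
      Real.volume_real_Ioo_of_le (by linarith)]
    · ring
    · rw [Set.disjoint_left]
      rintro x ⟨h2, h3⟩ ⟨h4, h5⟩
      linarith
  · exact measurableSet_lt (by fun_prop) measurable_const
  · intro x
    simp only [Set.mem_ofPred_eq, ← sub_sub, Real.cos_sub_two_pi]

/-- Under the uniform probability measure on `[0, 2π)`, the probability
that a random line through the origin (with normal direction `(cos φ, sin φ)`) separates
the unit vectors with angles `θi` and `θj` equals `|θi - θj|_{S¹} / π`. -/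
theorem random_line_separation_probability (θi θj : ℝ) :
    (MeasureTheory.volume {φ : ℝ | φ ∈ Set.Ico 0 (2 * Real.pi) ∧
        Real.cos (θi - φ) * Real.cos (θj - φ) < 0}).toReal / (2 * Real.pi)
      = circleDist (θi - θj) / Real.pi := by
  have hp := Real.pi_pos
  obtain ⟨n, d, hd, hx⟩ : ∃ (n : ℤ) (d : ℝ), |d| ≤ Real.pi ∧
      θi - θj = d + 2 * Real.pi * n := by
    refine ⟨round ((θi - θj) / (2 * Real.pi)),
      θi - θj - 2 * Real.pi * round ((θi - θj) / (2 * Real.pi)), ?_, by ring⟩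
    have h := abs_sub_round ((θi - θj) / (2 * Real.pi))
    have e : θi - θj - 2 * Real.pi * round ((θi - θj) / (2 * Real.pi)) =
        (2 * Real.pi) * ((θi - θj) / (2 * Real.pi) - round ((θi - θj) / (2 * Real.pi))) := by
      field_simp
    rw [e, abs_mul, abs_of_pos (by positivity)]
    nlinarith
  rw [circleDist_aux _ d n hx hd]
  have hc : ∀ φ, Real.cos (θi - φ) = Real.cos (θj + d - φ) := by
    intro φ
    rw [← Real.cos_add_int_mul_two_pi (θj + d - φ) n]
    congr 1; linarith
  simp only [hc]
  obtain ⟨h1, h2⟩ := abs_le.1 hd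
  suffices H : volume.real {φ : ℝ | φ ∈ Set.Ico 0 (2 * Real.pi) ∧
        Real.cos (θj + d - φ) * Real.cos (θj - φ) < 0} = 2 * |d| by
    rw [measureReal_def] at H
    rw [H]; field_simp
  rcases le_total 0 d with h | h
  · rw [abs_of_nonneg h]; exact sep_aux _ _ h h2
  · rw [abs_of_nonpos h, ← sep_aux (θj + d) (-d) (by linarith) (by linarith)]
    simp only [add_neg_cancel_right, mul_comm]
end

section
/- Let a ∈ {0,1}^{n×n} be the symmetric, zero-diagonal adjacency matrix of a simple undirected graph, let θ ∈ ℝ^n, and let ν be the uniform probability measure on [0, 2π). Then the expected number of edges cut by a random line through the origin with uniformly distributed normal direction satisfies ∫ ∑_{1≤i<j≤n} a_{ij} · 1{cos(θ_i − φ) cos(θ_j − φ) < 0} dν(φ) = ∑_{1≤i<j≤n} a_{ij} |θ_i − θ_j|_{S¹} / π. -/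
open Real MeasureTheory Finset

lemma circleDist_spec (x : ℝ) : circleDist x = |x - 2 * Real.pi * (round (x / (2 * Real.pi)) : ℤ)| ∧
    |x - 2 * Real.pi * (round (x / (2 * Real.pi)) : ℤ)| ≤ Real.pi := by
  have hp : 0 < 2 * Real.pi := by positivity
  have key : ∀ k : ℤ, |x - 2 * Real.pi * k| = 2 * Real.pi * |x / (2 * Real.pi) - k| := by
    intro k
    rw [← abs_of_pos hp, ← abs_mul, abs_of_pos hp]
    congr 1
    field_simp
  constructor
  · apply le_antisymm
    · exact ciInf_le ⟨0, by rintro _ ⟨k, rfl⟩; exact abs_nonneg _⟩ _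
    · apply le_ciInf
      intro k
      rw [key, key]
      exact mul_le_mul_of_nonneg_left (round_le _ _) hp.le
  · rw [key]
    have := abs_sub_round (x / (2 * Real.pi))
    nlinarith

lemma cos_circleDist (x : ℝ) : Real.cos (circleDist x) = Real.cos x := by
  rw [(circleDist_spec x).1, Real.cos_abs, mul_comm, Real.cos_sub_int_mul_two_pi]

lemma cut_measurable (s t : ℝ) : Measurable fun φ : ℝ =>
    (if Real.cos (s - φ) * Real.cos (t - φ) < 0 then (1 : ℝ) else 0) := by
  apply Measurable.ite _ measurable_const measurable_const
  exact measurableSet_lt (by fun_prop) (by fun_prop)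

lemma cut_integrable (s t : ℝ) : IntegrableOn (fun φ : ℝ =>
    (if Real.cos (s - φ) * Real.cos (t - φ) < 0 then (1 : ℝ) else 0))
    (Set.Ico 0 (2 * Real.pi)) := by
  apply Measure.integrableOn_of_bounded (M := 1) measure_Ico_lt_top.ne (cut_measurable s t).aestronglyMeasurable
  filter_upwards with φ
  split_ifs <;> simp

lemma cap_integral (d : ℝ) (h0 : 0 ≤ d) (h1 : d ≤ Real.pi) :
    ∫ v in (-Real.pi)..Real.pi, (if Real.cos d < Real.cos v then (1 : ℝ) else 0) = 2 * d := by
  have hp := Real.pi_pos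
  rw [intervalIntegral.integral_of_le (by linarith)]
  have : ∀ v ∈ Set.Ioc (-Real.pi) Real.pi, (if Real.cos d < Real.cos v then (1 : ℝ) else 0)
      = (Set.Ioo (-d) d).indicator (fun _ => (1 : ℝ)) v := by
    intro v hv
    have hv' : |v| ≤ Real.pi := abs_le.2 ⟨hv.1.le, hv.2⟩
    have : Real.cos d < Real.cos v ↔ v ∈ Set.Ioo (-d) d := by
      rw [← Real.cos_abs v, Real.strictAntiOn_cos.lt_iff_gt ⟨h0, h1⟩ ⟨abs_nonneg _, hv'⟩, abs_lt]
      rfl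
    simp only [Set.indicator, this]
  have hsub : Set.Ioc (-Real.pi) Real.pi ∩ Set.Ioo (-d) d = Set.Ioo (-d) d :=
    Set.inter_eq_right.2 (fun v hv => ⟨by linarith [hv.1], by linarith [hv.2]⟩)
  rw [setIntegral_congr_fun measurableSet_Ioc this, setIntegral_indicator measurableSet_Ioo,
    hsub]
  simp [Measure.real]
  rw [ENNReal.toReal_ofReal (by linarith)]
  ring

lemma cut_integral (s t : ℝ) : ∫ φ in Set.Ico 0 (2 * Real.pi),
    (if Real.cos (s - φ) * Real.cos (t - φ) < 0 then (1 : ℝ) else 0)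
      = 2 * circleDist (s - t) := by
  have hp := Real.pi_pos
  set d := circleDist (s - t) with hd
  have hd0 : 0 ≤ d := by rw [hd, (circleDist_spec _).1]; exact abs_nonneg _
  have hd1 : d ≤ Real.pi := by rw [hd, (circleDist_spec _).1]; exact (circleDist_spec _).2
  set h : ℝ → ℝ := fun v => if Real.cos d < Real.cos v then (1 : ℝ) else 0 with hh
  have hper : Function.Periodic h (2 * Real.pi) := by
    intro v; simp [hh]
  have hmeas : Measurable h :=
    Measurable.ite (measurableSet_lt (by fun_prop) (by fun_prop)) measurable_const measurable_const
  have hint : ∀ a b, IntervalIntegrable h volume a b := by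
    intro a b
    rw [intervalIntegrable_iff]
    apply Measure.integrableOn_of_bounded (M := 1) (by simp) hmeas.aestronglyMeasurable
    filter_upwards with φ
    simp only [hh]
    split_ifs <;> simp
  have heq : ∀ φ, (if Real.cos (s - φ) * Real.cos (t - φ) < 0 then (1 : ℝ) else 0)
      = h (2 * φ - (s + t + Real.pi)) := by
    intro φ
    have e : Real.cos (2 * φ - (s + t + Real.pi)) = Real.cos d
        - 2 * (Real.cos (s - φ) * Real.cos (t - φ)) := by
      have e1 : 2 * φ - (s + t + Real.pi) = -((s - φ) + (t - φ)) - Real.pi := by ring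
      have e2 : s - t = (s - φ) - (t - φ) := by ring
      rw [hd, cos_circleDist, e1, Real.cos_sub_pi, Real.cos_neg, e2, Real.cos_add, Real.cos_sub (s - φ)]
      ring
    simp only [hh, e]
    congr 1
    apply propext
    constructor <;> intro <;> linarith
  simp_rw [heq]
  rw [integral_Ico_eq_integral_Ioc, ← intervalIntegral.integral_of_le (by positivity),
    intervalIntegral.integral_comp_mul_sub h (by norm_num)]
  have e3 : 2 * (2 * Real.pi) - (s + t + Real.pi)
      = (2 * 0 - (s + t + Real.pi)) + (2 : ℤ) • (2 * Real.pi) := by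
    rw [zsmul_eq_mul]; push_cast; ring
  rw [e3, hper.intervalIntegral_add_zsmul_eq 2 _ hint, hper.intervalIntegral_add_eq _ (-Real.pi)]
  have e4 : -Real.pi + 2 * Real.pi = Real.pi := by ring
  rw [e4, cap_integral d hd0 hd1]
  simp

/-- The expected number of edges cut by a random line through the origin
with uniformly distributed normal direction equals `∑_{i<j} a_ij |θ_i - θ_j|_{S¹} / π`. -/
theorem expected_cut_edges_random_rounding
    (n : ℕ) (a : Fin n → Fin n → ℝ)
    (hsym : ∀ i j, a i j = a j i) (hdiag : ∀ i, a i i = 0)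
    (h01 : ∀ i j, a i j = 0 ∨ a i j = 1)
    (θ : Fin n → ℝ) :
    (1 / (2 * Real.pi)) * ∫ φ in Set.Ico 0 (2 * Real.pi),
        (∑ i : Fin n, ∑ j : Fin n, if i < j then
            a i j * (if Real.cos (θ i - φ) * Real.cos (θ j - φ) < 0 then (1 : ℝ) else 0)
          else 0)
      = ∑ i : Fin n, ∑ j : Fin n,
          if i < j then a i j * circleDist (θ i - θ j) / Real.pi else 0 := by
  have hi : ∀ i j : Fin n, IntegrableOn (fun φ => if i < j then
            a i j * (if Real.cos (θ i - φ) * Real.cos (θ j - φ) < 0 then (1 : ℝ) else 0)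
          else 0) (Set.Ico 0 (2 * Real.pi)) := by
    intro i j
    by_cases hij : i < j
    · simp only [hij, if_true]
      exact (cut_integrable _ _).const_mul _
    · simp [hij]
  rw [integral_finsetSum _ (fun i _ => integrable_finsetSum _ (fun j _ => hi i j)),
    Finset.mul_sum]
  refine Finset.sum_congr rfl fun i _ => ?_
  rw [integral_finsetSum _ (fun j _ => hi i j), Finset.mul_sum]
  refine Finset.sum_congr rfl fun j _ => ?_
  by_cases hij : i < j
  · simp only [hij, if_true]
    rw [integral_const_mul, cut_integral]
    field_simp
  · simp [hij]
end

section
/- Let a ∈ {0,1}^{n×n} be the symmetric, zero-diagonal adjacency matrix of a simple undirected graph, μ ≥ 0, and L(θ; a, μ) = ∑_{1≤i<j≤n} a_{ij} cos(θ_i − θ_j) + (μ/2) ∑_{i=1}^n sin²θ_i. Suppose θ̲ ∈ ℝ^n is a global minimizer of L(·; a, μ), and let c ≥ 0 be such that for every pair i < j with a_{ij} = 1, |θ̲_i − θ̲_j|_{S¹} / π ≥ c · (1 − cos(θ̲_i − θ̲_j)) / 2. Then the rounding expectation of θ̲ satisfies ∑_{1≤i<j≤n} a_{ij} |θ̲_i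 − θ̲_j|_{S¹} / π ≥ c · W_mc. -/
open Real Finset

/-- If `θ̲` is a global minimizer of the penalized max-cut objective
`L(θ; a, μ) = ∑_{i<j} a_ij cos(θ_i - θ_j) + (μ/2) ∑_i sin² θ_i`, and `c ≥ 0` is such that
`|θ̲_i - θ̲_j|_{S¹} / π ≥ c (1 - cos(θ̲_i - θ̲_j)) / 2` holds on every edge, then the
rounding expectation of `θ̲` is at least `c · W_mc`. -/
theorem rounding_expectation_of_minimizer_ge_ratio_mul_maxcut
    (n : ℕ) (a : Fin n → Fin n → ℝ)
    (hsym : ∀ i j, a i j = a j i) (hdiag : ∀ i, a i i = 0)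
    (h01 : ∀ i j, a i j = 0 ∨ a i j = 1)
    (μ : ℝ) (hμ : 0 ≤ μ)
    (L : (Fin n → ℝ) → ℝ)
    (hL : ∀ θ : Fin n → ℝ,
      L θ = (∑ i : Fin n, ∑ j : Fin n, if i < j then a i j * Real.cos (θ i - θ j) else 0)
        + μ / 2 * ∑ i : Fin n, Real.sin (θ i) ^ 2)
    (θmin : Fin n → ℝ) (hmin : ∀ θ : Fin n → ℝ, L θmin ≤ L θ)
    (c : ℝ) (hc : 0 ≤ c)
    (hratio : ∀ i j : Fin n, i < j → a i j = 1 →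
        c * ((1 - Real.cos (θmin i - θmin j)) / 2)
          ≤ circleDist (θmin i - θmin j) / Real.pi)
    (Wmc : ℝ)
    (hW : IsGreatest {w : ℝ | ∃ τ : Fin n → ℝ, (∀ i, τ i = 1 ∨ τ i = -1) ∧
        w = ∑ i : Fin n, ∑ j : Fin n, if i < j ∧ τ i ≠ τ j then a i j else 0} Wmc) :
    c * Wmc ≤ ∑ i : Fin n, ∑ j : Fin n,
        if i < j then a i j * circleDist (θmin i - θmin j) / Real.pi else 0 := by
  obtain ⟨⟨τ, hτ, rfl⟩, -⟩ := hW
  have h := hmin (fun i => if τ i = 1 then 0 else Real.pi)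
  rw [hL, hL] at h
  have hs : ∑ i : Fin n, Real.sin ((fun i => if τ i = 1 then (0:ℝ) else Real.pi) i) ^ 2 = 0 := by
    apply Finset.sum_eq_zero
    intro i _
    dsimp only
    split_ifs <;> simp
  have hp : 0 ≤ μ / 2 * ∑ i : Fin n, Real.sin (θmin i) ^ 2 :=
    mul_nonneg (by linarith) (Finset.sum_nonneg fun i _ => sq_nonneg _)
  rw [hs] at h
  have hcut : (∑ i : Fin n, ∑ j : Fin n, if i < j then
        a i j * Real.cos ((fun i => if τ i = 1 then (0:ℝ) else Real.pi) i
          - (fun i => if τ i = 1 then (0:ℝ) else Real.pi) j) else 0)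
      = (∑ i : Fin n, ∑ j : Fin n, if i < j then a i j else 0)
        - 2 * ∑ i : Fin n, ∑ j : Fin n, if i < j ∧ τ i ≠ τ j then a i j else 0 := by
    simp only [Finset.mul_sum, ← Finset.sum_sub_distrib]
    refine Finset.sum_congr rfl fun i _ => Finset.sum_congr rfl fun j _ => ?_
    by_cases hij : i < j
    · rcases hτ i with hi | hi <;> rcases hτ j with hj | hj <;>
        norm_num [hij, hi, hj] <;> ring
    · simp [hij]
  have hE : (∑ i : Fin n, ∑ j : Fin n,
        if i < j then a i j * ((1 - Real.cos (θmin i - θmin j)) / 2) else 0)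
      = ((∑ i : Fin n, ∑ j : Fin n, if i < j then a i j else 0)
        - ∑ i : Fin n, ∑ j : Fin n,
          if i < j then a i j * Real.cos (θmin i - θmin j) else 0) / 2 := by
    simp only [← Finset.sum_sub_distrib, Finset.sum_div]
    refine Finset.sum_congr rfl fun i _ => Finset.sum_congr rfl fun j _ => ?_
    split_ifs <;> ring
  rw [hcut] at h
  calc _ ≤ c * (∑ i : Fin n, ∑ j : Fin n,
        if i < j then a i j * ((1 - Real.cos (θmin i - θmin j)) / 2) else 0) := by
        apply mul_le_mul_of_nonneg_left _ hc
        rw [hE]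
        linarith
    _ ≤ _ := by
        simp only [Finset.mul_sum]
        refine Finset.sum_le_sum fun i _ => Finset.sum_le_sum fun j _ => ?_
        by_cases hij : i < j
        · rcases h01 i j with h0 | h1
          · simp [h0]
          · have := hratio i j hij h1
            simpa [hij, h1] using this
        · simp [hij]
end

section
/- For every x ∈ [0, π], x / π ≥ 0.878 · (1 − cos x) / 2; equivalently, (2/π) · x / (1 − cos x) ≥ 0.878 for all x ∈ (0, π]. (This is the Goemans–Williamson approximation-ratio inequality for the cosine coupling.) -/
open Real

lemma gw_cos_upper {y : ℝ} (h0 : 0 ≤ y) (h2 : y ≤ 2) : cos y ≤ 1 - y ^ 2 / 2 + y ^ 4 / 24 := by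
  have h := sin_ge_sub_cube (x := y / 2) (by linarith)
  have hp : 0 ≤ y / 2 - (y / 2) ^ 3 / 6 := by nlinarith [mul_nonneg h0 (sub_nonneg.2 h2), mul_nonneg h0 (mul_nonneg h0 (sub_nonneg.2 h2))]
  have hs := pow_le_pow_left₀ hp h 2
  have hc : cos y = 1 - 2 * sin (y / 2) ^ 2 := by
    have h1 := cos_two_mul (y / 2)
    have h2 := sin_sq_add_cos_sq (y / 2)
    rw [show 2 * (y / 2) = y by ring] at h1
    linarith
  rw [hc]
  have : 0 ≤ y ^ 6 := by positivity
  nlinarith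

lemma gw_poly {y : ℝ} (h0 : 0 ≤ y) (h2 : y ≤ 2) :
    0.878 * (2 - y ^ 2 / 2 + y ^ 4 / 24) * 3.1416 ≤ 2 * (3.1415 - y) := by
  have : 0 ≤ (4 - y ^ 2) * (y - 0.81) ^ 2 := by
    apply mul_nonneg _ (sq_nonneg _); nlinarith
  nlinarith [sq_nonneg (y - 0.81), sq_nonneg (y ^ 2 - 0.6561), sq_nonneg (y ^ 2 - 0.81 * y), mul_nonneg h0 (sq_nonneg (y - 0.81)), mul_nonneg (sub_nonneg.2 h2) (sq_nonneg (y - 0.81))]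

lemma gw_main {x : ℝ} (h0 : 0 ≤ x) (h1 : x ≤ π) : 0.878 * (1 - cos x) * π ≤ 2 * x := by
  have p1 := pi_gt_d4
  have p2 := pi_lt_d4
  rcases le_total x 1.4 with h | h
  · have hc := one_sub_sq_div_two_le_cos (x := x)
    have a : 0.878 * (1 - cos x) ≤ 0.878 * (0.7 * x) := by nlinarith
    have : 0.878 * (1 - cos x) * π ≤ 0.878 * (0.7 * x) * π := by gcongr
    nlinarith
  · have hc := gw_cos_upper (y := π - x) (by linarith) (by linarith)
    rw [cos_pi_sub] at hc
    have hp := gw_poly (y := π - x) (by linarith) (by linarith)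
    have b := neg_one_le_cos x
    have c := cos_le_one x
    have : 0.878 * (1 - cos x) * π ≤ 0.878 * (1 - cos x) * 3.1416 := by
      have : 0 ≤ 1 - cos x := by linarith
      gcongr
    linarith

/-- The Goemans–Williamson approximation-ratio inequality for the cosine
coupling: for every `x ∈ [0, π]`, `x / π ≥ 0.878 (1 - cos x) / 2`; equivalently, for every
`x ∈ (0, π]`, `(2/π) x / (1 - cos x) ≥ 0.878`. -/
theorem goemans_williamson_ratio_inequality :
    (∀ x ∈ Set.Icc (0 : ℝ) Real.pi,
        0.878 * ((1 - Real.cos x) / 2) ≤ x / Real.pi)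
    ∧ (∀ x ∈ Set.Ioc (0 : ℝ) Real.pi,
        (0.878 : ℝ) ≤ 2 / Real.pi * (x / (1 - Real.cos x))) := by
  constructor
  · rintro x ⟨h0, h1⟩
    rw [le_div_iff₀ pi_pos]
    linarith [gw_main h0 h1]
  · rintro x ⟨h0, h1⟩
    have hc : cos x < 1 := by
      have := cos_lt_cos_of_nonneg_of_le_pi le_rfl h1 h0
      rwa [cos_zero] at this
    have hd : 0 < 1 - cos x := by linarith
    rw [div_mul_div_comm, le_div_iff₀ (mul_pos pi_pos hd)]
    linarith [gw_main h0.le h1]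
end

section
/- Let a ∈ {0,1}^{n×n} be the symmetric, zero-diagonal adjacency matrix of a simple undirected graph, μ ≥ 0, and L(θ; a, μ) = ∑_{1≤i<j≤n} a_{ij} cos(θ_i − θ_j) + (μ/2) ∑_{i=1}^n sin²θ_i. If θ̲ ∈ ℝ^n is a global minimizer of L(·; a, μ), then ∑_{1≤i<j≤n} a_{ij} |θ̲_i − θ̲_j|_{S¹} / π ≥ 0.878 · W_mc. -/
open Real Finset

theorem gw_sin_lower {x : ℝ} (hx : 0 ≤ x) : x - x ^ 3 / 6 ≤ Real.sin x := by
  have hd : ∀ t : ℝ, HasDerivAt (fun t : ℝ => Real.sin t - (t - t ^ 3 / 6))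
      (Real.cos t - (1 - t ^ 2 / 2)) t := by
    intro t
    have h1 := (Real.hasDerivAt_sin t).sub
      ((hasDerivAt_id t).sub ((hasDerivAt_pow 3 t).div_const 6))
    have e : Real.cos t - (1 - t ^ 2 / 2) = Real.cos t - (1 - ((3 : ℕ) : ℝ) * t ^ (3 - 1) / 6) := by
      norm_num
      ring
    rw [e]
    exact h1
  have hm : Monotone (fun t : ℝ => Real.sin t - (t - t ^ 3 / 6)) := by
    apply monotone_of_deriv_nonneg
    · intro t
      exact (hd t).differentiableAt
    · intro t
      rw [(hd t).deriv]
      linarith [Real.one_sub_sq_div_two_le_cos (x := t)]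
  have h := hm hx
  norm_num at h
  linarith

theorem gw_ratio_scalar {d : ℝ} (hd : 0 ≤ d) :
    0.439 * Real.pi * (1 - Real.cos d) ≤ d := by
  have hp1 := Real.pi_gt_d4
  have hp2 := Real.pi_lt_d4
  rcases le_total d 1.44 with h | h
  · have hc := Real.one_sub_sq_div_two_le_cos (x := d)
    have h1 : 0.439 * Real.pi * (1 - Real.cos d) ≤ 0.439 * Real.pi * (d ^ 2 / 2) := by
      apply mul_le_mul_of_nonneg_left <;> linarith
    have h2 : 0.439 * Real.pi * (d ^ 2 / 2) ≤ 0.439 * 3.1416 * (d ^ 2 / 2) := by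
      apply mul_le_mul_of_nonneg_right <;> [linarith; positivity]
    nlinarith
  rcases le_total Real.pi d with h' | h'
  · have := Real.neg_one_le_cos d
    have h1 : 0.439 * Real.pi * (1 - Real.cos d) ≤ 0.439 * Real.pi * 2 := by
      apply mul_le_mul_of_nonneg_left <;> linarith
    linarith
  obtain ⟨x, rfl⟩ : ∃ x, d = Real.pi - 2 * x := ⟨(Real.pi - d) / 2, by ring⟩
  have hx0 : 0 ≤ x := by linarith
  have hx1 : x ≤ 0.8508 := by linarith
  have hs := gw_sin_lower hx0
  have hs0 : 0 ≤ x - x ^ 3 / 6 := by nlinarith [mul_nonneg hx0 hx0]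
  have hsq : (x - x ^ 3 / 6) ^ 2 ≤ Real.sin x ^ 2 := by gcongr
  have hcos : Real.cos (Real.pi - 2 * x) = -(1 - 2 * Real.sin x ^ 2) := by
    rw [Real.cos_pi_sub, Real.cos_two_mul, Real.cos_sq']
    ring
  have hq : x ^ 2 - x ^ 4 / 3 ≤ Real.sin x ^ 2 := by
    nlinarith [sq_nonneg (x ^ 3)]
  have hpoly : 2 * x ≤ 3.1415 * (0.122 + 0.878 * (x ^ 2 - x ^ 4 / 3)) := by
    nlinarith [mul_nonneg (sq_nonneg (x - 0.405)) (mul_nonneg hx0 (sub_nonneg.2 hx1)),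
      mul_nonneg (sq_nonneg (x - 0.405)) (sub_nonneg.2 hx1), sq_nonneg (x - 0.405)]
  have hpos : 0 ≤ 0.122 + 0.878 * (x ^ 2 - x ^ 4 / 3) := by linarith
  rw [hcos]
  have h3 : 3.1415 * (0.122 + 0.878 * (x ^ 2 - x ^ 4 / 3)) ≤
      Real.pi * (0.122 + 0.878 * Real.sin x ^ 2) := by
    apply mul_le_mul <;> linarith
  linarith

theorem gw_circleDist (x : ℝ) :
    0.439 * (1 - Real.cos x) ≤ circleDist x / Real.pi := by
  rw [le_div_iff₀ Real.pi_pos]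
  apply le_ciInf
  intro k
  have h := gw_ratio_scalar (abs_nonneg (x - 2 * Real.pi * k))
  rw [Real.cos_abs] at h
  have h2 : Real.cos (x - 2 * Real.pi * k) = Real.cos x := by
    rw [mul_comm (2 * Real.pi)]
    exact Real.cos_sub_int_mul_two_pi x k
  rw [h2] at h
  linarith

/-- If `θ̲` is a global minimizer of the penalized max-cut objective
`L(θ; a, μ) = ∑_{i<j} a_ij cos(θ_i - θ_j) + (μ/2) ∑_i sin² θ_i`, then the rounding
expectation satisfies `∑_{i<j} a_ij |θ̲_i - θ̲_j|_{S¹} / π ≥ 0.878 · W_mc`. -/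
theorem minimizer_rounding_expectation_ge_gw_ratio_mul_maxcut
    (n : ℕ) (a : Fin n → Fin n → ℝ)
    (hsym : ∀ i j, a i j = a j i) (hdiag : ∀ i, a i i = 0)
    (h01 : ∀ i j, a i j = 0 ∨ a i j = 1)
    (μ : ℝ) (hμ : 0 ≤ μ)
    (L : (Fin n → ℝ) → ℝ)
    (hL : ∀ θ : Fin n → ℝ,
      L θ = (∑ i : Fin n, ∑ j : Fin n, if i < j then a i j * Real.cos (θ i - θ j) else 0)
        + μ / 2 * ∑ i : Fin n, Real.sin (θ i) ^ 2)
    (θmin : Fin n → ℝ) (hmin : ∀ θ : Fin n → ℝ, L θmin ≤ L θ)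
    (Wmc : ℝ)
    (hW : IsGreatest {w : ℝ | ∃ τ : Fin n → ℝ, (∀ i, τ i = 1 ∨ τ i = -1) ∧
        w = ∑ i : Fin n, ∑ j : Fin n, if i < j ∧ τ i ≠ τ j then a i j else 0} Wmc) :
    0.878 * Wmc ≤ ∑ i : Fin n, ∑ j : Fin n,
        if i < j then a i j * circleDist (θmin i - θmin j) / Real.pi else 0 := by
  obtain ⟨⟨τ, hτ, hWe⟩, -⟩ := hW
  have key := hmin (fun i => if τ i = 1 then 0 else Real.pi)
  rw [hL, hL] at key
  have hs : ∑ i : Fin n, Real.sin ((fun i => if τ i = 1 then 0 else Real.pi) i) ^ 2 = 0 := by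
    apply Finset.sum_eq_zero
    intro i _
    dsimp only
    split_ifs <;> simp
  rw [hs] at key
  have hpen : 0 ≤ μ / 2 * ∑ i : Fin n, Real.sin (θmin i) ^ 2 :=
    mul_nonneg (by linarith) (Finset.sum_nonneg fun i _ => sq_nonneg _)
  have h1 : (∑ i : Fin n, ∑ j : Fin n, if i < j then a i j * 0.439 else 0)
      - 0.439 * (∑ i : Fin n, ∑ j : Fin n, if i < j then a i j * Real.cos (θmin i - θmin j) else 0)
      ≤ ∑ i : Fin n, ∑ j : Fin n,
        if i < j then a i j * circleDist (θmin i - θmin j) / Real.pi else 0 := by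
    simp only [Finset.mul_sum, ← Finset.sum_sub_distrib]
    refine Finset.sum_le_sum fun i _ => Finset.sum_le_sum fun j _ => ?_
    split_ifs
    · have ha : 0 ≤ a i j := by rcases h01 i j with h | h <;> rw [h] <;> norm_num
      have := mul_le_mul_of_nonneg_left (gw_circleDist (θmin i - θmin j)) ha
      rw [mul_div_assoc]
      linarith
    · norm_num
  have h2 : (∑ i : Fin n, ∑ j : Fin n, if i < j then a i j * 0.439 else 0)
      - 0.439 * (∑ i : Fin n, ∑ j : Fin n, if i < j then a i j *
        Real.cos ((fun i => if τ i = 1 then 0 else Real.pi) i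
          - (fun i => if τ i = 1 then 0 else Real.pi) j) else 0)
      = 0.878 * Wmc := by
    rw [hWe]
    simp only [Finset.mul_sum, ← Finset.sum_sub_distrib]
    refine Finset.sum_congr rfl fun i _ => Finset.sum_congr rfl fun j _ => ?_
    by_cases hij : i < j
    · rcases hτ i with hi | hi <;> rcases hτ j with hj | hj <;>
        norm_num [hij, hi, hj] <;> ring
    · simp [hij]
  linarith
end

section
/- Let a ∈ {0,1}^{n×n} be the symmetric, zero-diagonal adjacency matrix of a simple undirected graph, and let g: ℝ → ℝ be even, 2π-periodic, with values in [−1, 1], satisfying g(π) = −1 and 1 − g(x) ≤ 2x/π for all x ∈ [0, π]. Define L(θ; a, g) = ∑_{1≤i<j≤n} a_{ij} g(θ_i − θ_j). Then: (i) for every θ ∈ ℝ^n, L(θ; a, g) ≥ |E| − 2·W_mc; and (ii) if σ ∈ {−1,+1}^n attains the max cut and θ* is its binarized configuration (θ*_i = 0 if σ_i = +1, θ*_i = π if σ_i = −1), then L(θ*; a, g) = |E| − 2·W_mc. Hence the global minimum of L(·; a, g) equals |E| − 2·W_mc and is attained at θ*. -/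
open Real Finset

/-- threshold function -/
noncomputable def stepFn (p t : ℝ) : ℝ := if t ≤ p then 1 else -1

lemma stepFn_int (p : ℝ) (a b : ℝ) : IntervalIntegrable (stepFn p) MeasureTheory.volume a b := by
  apply AntitoneOn.intervalIntegrable
  intro x _ y _ hxy
  unfold stepFn
  split_ifs <;> linarith

lemma stepFn_integral (p : ℝ) (h0 : 0 ≤ p) (h1 : p ≤ π) :
    ∫ t in (0:ℝ)..π, stepFn p t = 2 * p - π := by
  rw [← intervalIntegral.integral_add_adjacent_intervals (stepFn_int p 0 p) (stepFn_int p p π)]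
  have e1 : ∫ t in (0:ℝ)..p, stepFn p t = ∫ t in (0:ℝ)..p, (1:ℝ) := by
    apply intervalIntegral.integral_congr_ae
    refine Filter.Eventually.of_forall fun t ht => ?_
    rw [Set.uIoc_of_le h0] at ht
    simp [stepFn, ht.2]
  have e2 : ∫ t in p..π, stepFn p t = ∫ t in p..π, (-1:ℝ) := by
    apply intervalIntegral.integral_congr_ae
    refine Filter.Eventually.of_forall fun t ht => ?_
    rw [Set.uIoc_of_le h1] at ht
    simp [stepFn, ht.1]
  rw [e1, e2, intervalIntegral.integral_const, intervalIntegral.integral_const]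
  simp only [smul_eq_mul]
  ring

lemma integrable_fun_sum {n : ℕ} (f : Fin n → ℝ → ℝ)
    (hf : ∀ i, IntervalIntegrable (f i) MeasureTheory.volume 0 π) :
    IntervalIntegrable (fun t => ∑ i, f i t) MeasureTheory.volume 0 π := by
  have e : (fun t => ∑ i, f i t) = ∑ i, f i := by
    funext t
    simp
  rw [e]
  exact IntervalIntegrable.sum Finset.univ (fun i _ => hf i)

lemma step_prod_aux (p q : ℝ) (hp : 0 ≤ p) (hpq : p ≤ q) (hq : q ≤ π) :
    IntervalIntegrable (fun t => stepFn p t * stepFn q t) MeasureTheory.volume 0 π ∧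
    ∫ t in (0:ℝ)..π, stepFn p t * stepFn q t = π - 2 * |p - q| := by
  have e : (fun t => stepFn p t * stepFn q t) = fun t => 1 + (stepFn p t - stepFn q t) := by
    funext t
    unfold stepFn
    split_ifs <;> first | (exfalso; linarith) | norm_num
  have hi := (stepFn_int p 0 π).sub (stepFn_int q 0 π)
  have h1 : IntervalIntegrable (fun _ : ℝ => (1:ℝ)) MeasureTheory.volume 0 π :=
    intervalIntegrable_const
  rw [e]
  refine ⟨h1.add hi, ?_⟩
  rw [intervalIntegral.integral_add h1 hi,
    intervalIntegral.integral_sub (stepFn_int p 0 π) (stepFn_int q 0 π),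
    stepFn_integral p hp (hpq.trans hq), stepFn_integral q (hp.trans hpq) hq,
    abs_of_nonpos (by linarith), intervalIntegral.integral_const]
  simp only [smul_eq_mul]
  ring

lemma step_prod (p q : ℝ) (hp : 0 ≤ p) (hp' : p ≤ π) (hq : 0 ≤ q) (hq' : q ≤ π) :
    IntervalIntegrable (fun t => stepFn p t * stepFn q t) MeasureTheory.volume 0 π ∧
    ∫ t in (0:ℝ)..π, stepFn p t * stepFn q t = π - 2 * |p - q| := by
  rcases le_total p q with h | h
  · exact step_prod_aux p q hp h hq'
  · have := step_prod_aux q p hq h hp'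
    rw [abs_sub_comm]
    simpa only [mul_comm] using this

lemma exists_phase (x : ℝ) : ∃ (m : ℤ) (s p : ℝ), 0 ≤ p ∧ p ≤ π ∧
    ((s = 1 ∧ x = p + m * (2 * π)) ∨ (s = -1 ∧ x = p + π + m * (2 * π))) := by
  have hpi := Real.pi_pos
  have h1 := Int.floor_le (x / π)
  have h2 := Int.lt_floor_add_one (x / π)
  rw [le_div_iff₀ hpi] at h1
  rw [div_lt_iff₀ hpi] at h2
  rcases Int.even_or_odd' ⌊x / π⌋ with ⟨m, h | h⟩
  · refine ⟨m, 1, x - m * (2 * π), ?_, ?_, Or.inl ⟨rfl, by ring⟩⟩ <;>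
    · rw [h] at h1 h2
      push_cast at h1 h2
      linarith
  · refine ⟨m, -1, x - π - m * (2 * π), ?_, ?_, Or.inr ⟨rfl, by ring⟩⟩ <;>
    · rw [h] at h1 h2
      push_cast at h1 h2
      linarith

lemma edge_bound (g : ℝ → ℝ)
    (heven : ∀ x, g (-x) = g x)
    (hper : ∀ x, g (x + 2 * Real.pi) = g x)
    (hratio : ∀ x ∈ Set.Icc (0 : ℝ) Real.pi, 1 - g x ≤ 2 * x / Real.pi)
    (x y : ℝ) (m k : ℤ) (s r p q : ℝ) (hp : 0 ≤ p) (hp' : p ≤ π) (hq : 0 ≤ q) (hq' : q ≤ π)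
    (hx : (s = 1 ∧ x = p + m * (2 * π)) ∨ (s = -1 ∧ x = p + π + m * (2 * π)))
    (hy : (r = 1 ∧ y = q + k * (2 * π)) ∨ (r = -1 ∧ y = q + π + k * (2 * π))) :
    π * (1 - g (x - y)) ≤ π - s * r * (π - 2 * |p - q|) := by
  have hpi := Real.pi_pos
  have hP : Function.Periodic g (2 * π) := hper
  have hZ : ∀ (m : ℤ) (x : ℝ), g (x + m * (2 * π)) = g x := fun m x => hP.int_mul m x
  have hr : ∀ z, 0 ≤ z → z ≤ π → π * (1 - g z) ≤ 2 * z := by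
    intro z h0 h1
    have := hratio z ⟨h0, h1⟩
    rw [le_div_iff₀ hpi] at this
    linarith
  have habs : ∀ z, g |z| = g z := by
    intro z
    rcases abs_choice z with h | h <;> rw [h]
    exact heven z
  have hd : |p - q| ≤ π := abs_le.mpr ⟨by linarith, by linarith⟩
  have hd0 := abs_nonneg (p - q)
  have same := hr _ hd0 hd
  have opp := hr (π - |p - q|) (by linarith) (by linarith)
  rw [habs] at same
  have hopp : g (π - |p - q|) = g (p - q + π) := by
    rcases abs_choice (p - q) with h | h <;> rw [h]
    · rw [← heven, ← hper]
      congr 1; ring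
    · congr 1; ring
  rw [hopp] at opp
  rcases hx with ⟨rfl, rfl⟩ | ⟨rfl, rfl⟩ <;> rcases hy with ⟨rfl, rfl⟩ | ⟨rfl, rfl⟩
  · rw [show p + m * (2 * π) - (q + k * (2 * π)) = p - q + ((m - k : ℤ) : ℝ) * (2 * π) by
      push_cast; ring, hZ]
    linarith
  · rw [show p + m * (2 * π) - (q + π + k * (2 * π))
      = p - q + π + ((m - k - 1 : ℤ) : ℝ) * (2 * π) by push_cast; ring, hZ]
    linarith
  · rw [show p + π + m * (2 * π) - (q + k * (2 * π))
      = p - q + π + ((m - k : ℤ) : ℝ) * (2 * π) by push_cast; ring, hZ]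
    linarith
  · rw [show p + π + m * (2 * π) - (q + π + k * (2 * π))
      = p - q + ((m - k : ℤ) : ℝ) * (2 * π) by push_cast; ring, hZ]
    linarith

/-- For an even, `2π`-periodic coupling `g` with values in `[-1,1]`,
`g(π) = -1`, and `1 - g(x) ≤ 2x/π` on `[0, π]`: (i) every configuration `θ` satisfies
`L(θ; a, g) ≥ |E| - 2 W_mc`; (ii) the binarized configuration `θ*` of a max-cut spin
configuration `σ` satisfies `L(θ*; a, g) = |E| - 2 W_mc`; hence the global minimum of
`L(·; a, g)` equals `|E| - 2 W_mc` and is attained at `θ*`. -/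
theorem generalized_coupling_global_min_is_maxcut_energy
    (n : ℕ) (a : Fin n → Fin n → ℝ)
    (hsym : ∀ i j, a i j = a j i) (hdiag : ∀ i, a i i = 0)
    (h01 : ∀ i j, a i j = 0 ∨ a i j = 1)
    (g : ℝ → ℝ)
    (heven : ∀ x, g (-x) = g x)
    (hper : ∀ x, g (x + 2 * Real.pi) = g x)
    (hbd : ∀ x, g x ∈ Set.Icc (-1 : ℝ) 1)
    (hgpi : g Real.pi = -1)
    (hratio : ∀ x ∈ Set.Icc (0 : ℝ) Real.pi, 1 - g x ≤ 2 * x / Real.pi)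
    (L : (Fin n → ℝ) → ℝ)
    (hL : ∀ θ : Fin n → ℝ,
      L θ = ∑ i : Fin n, ∑ j : Fin n, if i < j then a i j * g (θ i - θ j) else 0)
    (Wmc : ℝ)
    (hW : IsGreatest {w : ℝ | ∃ τ : Fin n → ℝ, (∀ i, τ i = 1 ∨ τ i = -1) ∧
        w = ∑ i : Fin n, ∑ j : Fin n, if i < j ∧ τ i ≠ τ j then a i j else 0} Wmc)
    (σ : Fin n → ℝ) (hσ : ∀ i, σ i = 1 ∨ σ i = -1)
    (hσmax : (∑ i : Fin n, ∑ j : Fin n, if i < j ∧ σ i ≠ σ j then a i j else 0) = Wmc)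
    (θstar : Fin n → ℝ)
    (hθstar : ∀ i, θstar i = if σ i = 1 then 0 else Real.pi) :
    (∀ θ : Fin n → ℝ,
        (∑ i : Fin n, ∑ j : Fin n, if i < j then a i j else 0) - 2 * Wmc ≤ L θ)
    ∧ L θstar = (∑ i : Fin n, ∑ j : Fin n, if i < j then a i j else 0) - 2 * Wmc
    ∧ IsLeast {v : ℝ | ∃ θ : Fin n → ℝ, v = L θ}
        ((∑ i : Fin n, ∑ j : Fin n, if i < j then a i j else 0) - 2 * Wmc) := by
  have hpi := Real.pi_pos
  have hA : ∀ θ : Fin n → ℝ,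
      (∑ i : Fin n, ∑ j : Fin n, if i < j then a i j else 0) - 2 * Wmc ≤ L θ := by
    intro θ
    choose m s p hp hp' hsp using fun i => exists_phase (θ i)
    have hs : ∀ i, s i = 1 ∨ s i = -1 := fun i => (hsp i).imp And.left And.left
    let w : Fin n → Fin n → ℝ := fun i j => if i < j then a i j else 0
    have hw : ∀ i j, 0 ≤ w i j := by
      intro i j
      simp only [w]
      split_ifs
      · rcases h01 i j with h | h <;> rw [h]
        norm_num
      · exact le_rfl
    have hIntg : ∀ i j, IntervalIntegrable
        (fun t => w i j * (1 - s i * s j * (stepFn (p i) t * stepFn (p j) t)))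
        MeasureTheory.volume 0 π := fun i j =>
      (intervalIntegrable_const.sub
        ((step_prod _ _ (hp i) (hp' i) (hp j) (hp' j)).1.const_mul _)).const_mul _
    have hval : ∀ i j, ∫ t in (0:ℝ)..π,
        w i j * (1 - s i * s j * (stepFn (p i) t * stepFn (p j) t))
        = w i j * (π - s i * s j * (π - 2 * |p i - p j|)) := by
      intro i j
      have := step_prod _ _ (hp i) (hp' i) (hp j) (hp' j)
      rw [intervalIntegral.integral_const_mul, intervalIntegral.integral_sub
        intervalIntegrable_const (this.1.const_mul _), intervalIntegral.integral_const_mul,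
        this.2, intervalIntegral.integral_const]
      simp
    have hpt : ∀ t, ∑ i, ∑ j, w i j * (1 - s i * s j * (stepFn (p i) t * stepFn (p j) t))
        ≤ 2 * Wmc := by
      intro t
      have hτ : ∀ i, s i * stepFn (p i) t = 1 ∨ s i * stepFn (p i) t = -1 := by
        intro i
        unfold stepFn
        rcases hs i with h | h <;> rw [h] <;> split_ifs <;> norm_num
      have hle := hW.2 ⟨fun i => s i * stepFn (p i) t, hτ, rfl⟩
      refine le_trans (le_of_eq ?_) (mul_le_mul_of_nonneg_left hle zero_le_two)
      simp only [Finset.mul_sum]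
      refine Finset.sum_congr rfl fun i _ => Finset.sum_congr rfl fun j _ => ?_
      rw [show s i * s j * (stepFn (p i) t * stepFn (p j) t)
        = (s i * stepFn (p i) t) * (s j * stepFn (p j) t) by ring]
      simp only [w]
      by_cases hij : i < j
      · rcases hτ i with h | h <;> rcases hτ j with h' | h' <;> simp [h, h', hij] <;> norm_num <;> ring
      · simp [hij]
    have hI : ∫ t in (0:ℝ)..π,
        ∑ i, ∑ j, w i j * (1 - s i * s j * (stepFn (p i) t * stepFn (p j) t))
        = ∑ i, ∑ j, w i j * (π - s i * s j * (π - 2 * |p i - p j|)) := by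
      rw [intervalIntegral.integral_finsetSum]
      · refine Finset.sum_congr rfl fun i _ => ?_
        rw [intervalIntegral.integral_finsetSum fun j _ => hIntg i j]
        exact Finset.sum_congr rfl fun j _ => hval i j
      · intro i _
        exact integrable_fun_sum _ (fun j => hIntg i j)
    have hU : ∫ t in (0:ℝ)..π,
        ∑ i, ∑ j, w i j * (1 - s i * s j * (stepFn (p i) t * stepFn (p j) t))
        ≤ ∫ t in (0:ℝ)..π, 2 * Wmc := by
      apply intervalIntegral.integral_mono_on hpi.le _ intervalIntegrable_const
        (fun t _ => hpt t)
      exact integrable_fun_sum _ (fun i => integrable_fun_sum _ (fun j => hIntg i j))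
    rw [hI, intervalIntegral.integral_const, smul_eq_mul, sub_zero] at hU
    have hlow : ∑ i, ∑ j, w i j * (π * (1 - g (θ i - θ j)))
        ≤ ∑ i, ∑ j, w i j * (π - s i * s j * (π - 2 * |p i - p j|)) := by
      refine Finset.sum_le_sum fun i _ => Finset.sum_le_sum fun j _ => ?_
      exact mul_le_mul_of_nonneg_left (edge_bound g heven hper hratio _ _ (m i) (m j) _ _ _ _
        (hp i) (hp' i) (hp j) (hp' j) (hsp i) (hsp j)) (hw i j)
    have heq : ∑ i, ∑ j, w i j * (π * (1 - g (θ i - θ j)))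
        = π * ((∑ i : Fin n, ∑ j : Fin n, if i < j then a i j else 0) - L θ) := by
      rw [hL]
      simp only [mul_sub, Finset.mul_sum, ← Finset.sum_sub_distrib]
      refine Finset.sum_congr rfl fun i _ => Finset.sum_congr rfl fun j _ => ?_
      simp only [w]
      split_ifs <;> ring
    rw [heq] at hlow
    have := le_of_mul_le_mul_left (hlow.trans hU) hpi
    linarith
  have hg0 : g 0 = 1 := by
    have h1 := hratio 0 ⟨le_rfl, hpi.le⟩
    have h2 := (hbd 0).2
    simp at h1
    linarith
  have hB : L θstar
      = (∑ i : Fin n, ∑ j : Fin n, if i < j then a i j else 0) - 2 * Wmc := by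
    rw [hL, ← hσmax]
    simp only [Finset.mul_sum, ← Finset.sum_sub_distrib]
    refine Finset.sum_congr rfl fun i _ => Finset.sum_congr rfl fun j _ => ?_
    rw [hθstar, hθstar]
    have hne : ¬ ((-1 : ℝ) = 1) := by norm_num
    have hne' : ¬ ((1 : ℝ) = -1) := by norm_num
    by_cases hij : i < j
    · rcases hσ i with h | h <;> rcases hσ j with h' | h' <;>
        simp [h, h', hij, hne, hne', hg0, hgpi, heven] <;> ring
    · simp [hij]
  refine ⟨hA, hB, ⟨θstar, hB.symm⟩, ?_⟩
  rintro v ⟨θ, rfl⟩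
  exact hA θ
end

section
/- Let a ∈ {0,1}^{n×n} be the symmetric, zero-diagonal adjacency matrix of a simple undirected graph G, and let g: ℝ → ℝ be even, 2π-periodic, with values in [−1, 1], satisfying g(π) = −1, 1 − g(x) ≤ 2x/π for all x ∈ [0, π], and g(x) > −1 for x ∈ [0, π). Suppose G has a unique max-cut partition up to swapping the two sides, given by the pair {V₁*, V₂*}. Then every global minimizer θ ∈ ℝ^n of L(θ; a, g) = ∑_{1≤i<j≤n} a_{ij} g(θ_i − θ_j) is binarized up to a global rotation: for all i, j, θ_i − θ_j is an integer multiple of π, and the induced partition {{i : θ_i − θ_1 ∈ 2πℤ}, {i : θ_i − θ_1 − π ∈ 2πℤ}} equals {V₁*, V₂*}. -/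
open Real Finset

open MeasureTheory in
/-- length of the threshold window -/
lemma aux_int_uIoc (x y : ℝ) (hx : x ∈ Set.Ico 0 π) (hy : y ∈ Set.Ico 0 π) :
    ∫ t in Set.Ioc 0 π, (Set.uIoc x y).indicator (fun _ => (1:ℝ)) t = |x - y| := by
  rw [setIntegral_indicator measurableSet_uIoc]
  have : Set.Ioc 0 π ∩ Set.uIoc x y = Set.uIoc x y := by
    apply Set.inter_eq_right.2
    intro t ht
    rw [Set.mem_uIoc] at ht
    obtain ⟨h1, h2⟩ := hx
    obtain ⟨h3, h4⟩ := hy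
    constructor <;> rcases ht with ht | ht <;> linarith [ht.1, ht.2]
  rw [this]
  rw [setIntegral_const, Set.uIoc, measureReal_def, Real.volume_Ioc,
    ENNReal.toReal_ofReal (by simp), max_sub_min_eq_abs]
  simp [abs_sub_comm]

/-- the coupling in terms of thresholds -/
lemma aux_g (g : ℝ → ℝ) (heven : ∀ x, g (-x) = g x)
    (hper : ∀ x, g (x + 2 * Real.pi) = g x)
    (hratio : ∀ x ∈ Set.Icc (0 : ℝ) Real.pi, 1 - g x ≤ 2 * x / Real.pi)
    (k l : ℤ) (x y : ℝ) (hx : x ∈ Set.Ico 0 π) (hy : y ∈ Set.Ico 0 π) :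
    π * (1 - g ((k * π + x) - (l * π + y))) ≤
      2 * (if (Even k ↔ Even l) then |x - y| else π - |x - y|) := by
  have hp : Function.Periodic g (2 * π) := hper
  obtain ⟨h1, h2⟩ := hx
  obtain ⟨h3, h4⟩ := hy
  have hpi := Real.pi_pos
  have habs : |x - y| ≤ π := by rw [abs_le]; constructor <;> linarith
  have key : ∀ z ∈ Set.Icc (0:ℝ) π, π * (1 - g z) ≤ 2 * z := by
    intro z hz
    have := hratio z hz
    rw [le_div_iff₀ hpi] at this
    linarith
  by_cases hpar : Even k ↔ Even l
  · rw [if_pos hpar]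
    obtain ⟨m, hm⟩ := Int.even_sub.2 hpar
    have e : (k * π + x) - (l * π + y) = (x - y) + m * (2 * π) := by
      have : (k:ℝ) - l = m + m := by exact_mod_cast hm
      linear_combination π * this
    rw [e, hp.int_mul m]
    have e2 : g (x - y) = g |x - y| := by
      rcases abs_cases (x - y) with h | h <;> rw [h.1]
      rw [heven]
    rw [e2]
    exact key _ ⟨abs_nonneg _, habs⟩
  · rw [if_neg hpar]
    have hodd : Odd (k - l) := by
      rw [← Int.not_even_iff_odd, Int.even_sub]; exact hpar
    obtain ⟨m, hm⟩ := hodd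
    have hm' : (k:ℝ) - l = 2 * m + 1 := by exact_mod_cast hm
    have e2 : g ((k * π + x) - (l * π + y)) = g (π - |x - y|) := by
      rcases abs_cases (x - y) with h | h <;> rw [h.1]
      · have e : (k * π + x) - (l * π + y) = -(π - (x - y)) + ((m + 1 : ℤ) : ℝ) * (2 * π) := by
          push_cast
          linear_combination π * hm'
        rw [e, hp.int_mul (m + 1), heven]
      · have e : (k * π + x) - (l * π + y) = (π - -(x - y)) + m * (2 * π) := by
          linear_combination π * hm'
        rw [e, hp.int_mul m]
    rw [e2]
    exact key _ ⟨by linarith, by linarith [abs_nonneg (x - y)]⟩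

lemma aux_ind (k l : ℤ) (x y t : ℝ) :
    (if ((Even k ↔ t ≤ x) ↔ (Even l ↔ t ≤ y)) then (0:ℝ) else 1) =
    if (Even k ↔ Even l) then (Set.uIoc x y).indicator (fun _ => (1:ℝ)) t
      else 1 - (Set.uIoc x y).indicator (fun _ => (1:ℝ)) t := by
  by_cases h : t ∈ Set.uIoc x y
  · rw [Set.indicator_of_mem h]
    rw [Set.mem_uIoc] at h
    rcases h with h | h
    · have h1 := not_le.2 h.1
      have h2 := h.2
      by_cases hk : Even k <;> by_cases hl : Even l <;> simp [hk, hl, h1, h2]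
    · have h1 := not_le.2 h.1
      have h2 := h.2
      by_cases hk : Even k <;> by_cases hl : Even l <;> simp [hk, hl, h1, h2]
  · rw [Set.indicator_of_notMem h]
    have : t ≤ x ↔ t ≤ y := by
      rw [Set.mem_uIoc] at h
      push Not at h
      constructor
      · intro h1
        by_contra h2
        exact absurd (h.2 (not_le.1 h2)) (not_lt.2 h1)
      · intro h1
        by_contra h2
        exact absurd (h.1 (not_le.1 h2)) (not_lt.2 h1)
    by_cases hk : Even k <;> by_cases hl : Even l <;> by_cases hy : t ≤ y <;>
      simp [hk, hl, this, hy]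

open MeasureTheory in
lemma aux_integrable_ind (x y : ℝ) :
    Integrable ((Set.uIoc x y).indicator (fun _ => (1:ℝ))) (volume.restrict (Set.Ioc 0 π)) :=
  (integrable_const (1:ℝ)).indicator measurableSet_uIoc

open MeasureTheory in
lemma aux_integrable (k l : ℤ) (x y : ℝ) :
    Integrable (fun t => if ((Even k ↔ t ≤ x) ↔ (Even l ↔ t ≤ y)) then (0:ℝ) else 1)
      (volume.restrict (Set.Ioc 0 π)) := by
  simp only [aux_ind]
  by_cases h : Even k ↔ Even l
  · simp only [h, if_true]
    exact aux_integrable_ind x y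
  · simp only [h, if_false]
    exact (integrable_const (1:ℝ)).sub (aux_integrable_ind x y)

open MeasureTheory in
lemma aux_integral (k l : ℤ) (x y : ℝ) (hx : x ∈ Set.Ico 0 π) (hy : y ∈ Set.Ico 0 π) :
    ∫ t in Set.Ioc 0 π, (if ((Even k ↔ t ≤ x) ↔ (Even l ↔ t ≤ y)) then (0:ℝ) else 1) =
      if (Even k ↔ Even l) then |x - y| else π - |x - y| := by
  simp only [aux_ind]
  by_cases h : Even k ↔ Even l
  · simp only [h, if_true]
    exact aux_int_uIoc x y hx hy
  · simp only [h, if_false]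
    rw [integral_sub (integrable_const _) (aux_integrable_ind x y), aux_int_uIoc x y hx hy]
    simp [measureReal_def, Real.pi_pos.le]

lemma aux_exists_rep (t : ℝ) : ∃ k : ℤ, ∃ r : ℝ, r ∈ Set.Ico 0 π ∧ t = k * π + r := by
  have hpi := Real.pi_pos
  refine ⟨⌊t / π⌋, t - ⌊t / π⌋ * π, ⟨?_, ?_⟩, by ring⟩
  · have := Int.floor_le (t / π)
    rw [le_div_iff₀ hpi] at this
    linarith
  · have := Int.lt_floor_add_one (t / π)
    rw [div_lt_iff₀ hpi] at this
    linarith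

lemma aux_parity (k l : ℤ) :
    ((∃ m : ℤ, (k:ℝ) * π - l * π = 2 * π * m) ↔ (Even k ↔ Even l)) ∧
    ((∃ m : ℤ, (k:ℝ) * π - l * π - π = 2 * π * m) ↔ ¬ (Even k ↔ Even l)) := by
  have hpi := Real.pi_pos.ne'
  constructor
  · rw [← Int.even_sub]
    constructor
    · rintro ⟨m, hm⟩
      refine ⟨m, ?_⟩
      have : (k:ℝ) - l = m + m := by
        apply mul_right_cancel₀ hpi
        linear_combination hm
      exact_mod_cast this
    · rintro ⟨m, hm⟩
      refine ⟨m, ?_⟩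
      have : (k:ℝ) - l = m + m := by exact_mod_cast hm
      linear_combination π * this
  · rw [← Int.even_sub, Int.not_even_iff_odd]
    constructor
    · rintro ⟨m, hm⟩
      refine ⟨m, ?_⟩
      have : (k:ℝ) - l = 2 * m + 1 := by
        apply mul_right_cancel₀ hpi
        linear_combination hm
      exact_mod_cast this
    · rintro ⟨m, hm⟩
      refine ⟨m, ?_⟩
      have : (k:ℝ) - l = 2 * m + 1 := by exact_mod_cast hm
      linear_combination π * this

/-- Suppose `g` is even, `2π`-periodic, takes values in `[-1,1]`, has
`g(π) = -1`, satisfies `1 - g(x) ≤ 2x/π` on `[0, π]` and `g(x) > -1` on `[0, π)`, and the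
graph has a unique max-cut partition pair `{V₁*, V₂*}`. Then every global minimizer `θ`
of `L(θ; a, g) = ∑_{i<j} a_ij g(θ_i - θ_j)` is binarized up to a global rotation: all
pairwise differences `θ_i - θ_j` are integer multiples of `π`, and the induced partition
equals `{V₁*, V₂*}`. -/
theorem unique_maxcut_minimizers_are_binarized
    (n : ℕ) (hn : 0 < n) (a : Fin n → Fin n → ℝ)
    (hsym : ∀ i j, a i j = a j i) (hdiag : ∀ i, a i i = 0)
    (h01 : ∀ i j, a i j = 0 ∨ a i j = 1)
    (g : ℝ → ℝ)
    (heven : ∀ x, g (-x) = g x)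
    (hper : ∀ x, g (x + 2 * Real.pi) = g x)
    (hbd : ∀ x, g x ∈ Set.Icc (-1 : ℝ) 1)
    (hgpi : g Real.pi = -1)
    (hratio : ∀ x ∈ Set.Icc (0 : ℝ) Real.pi, 1 - g x ≤ 2 * x / Real.pi)
    (hneg : ∀ x ∈ Set.Ico (0 : ℝ) Real.pi, -1 < g x)
    (cutval : Finset (Fin n) → Finset (Fin n) → ℝ)
    (hcutval : ∀ W₁ W₂ : Finset (Fin n), cutval W₁ W₂ = ∑ i : Fin n, ∑ j : Fin n,
        if i < j ∧ ((i ∈ W₁ ∧ j ∈ W₂) ∨ (i ∈ W₂ ∧ j ∈ W₁)) then a i j else 0)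
    (V₁ V₂ : Finset (Fin n))
    (hcover : V₁ ∪ V₂ = Finset.univ) (hdisj : Disjoint V₁ V₂)
    (hmax : ∀ W₁ W₂ : Finset (Fin n), W₁ ∪ W₂ = Finset.univ → Disjoint W₁ W₂ →
        cutval W₁ W₂ ≤ cutval V₁ V₂)
    (huniq : ∀ W₁ W₂ : Finset (Fin n), W₁ ∪ W₂ = Finset.univ → Disjoint W₁ W₂ →
        cutval W₁ W₂ = cutval V₁ V₂ →
        (W₁ = V₁ ∧ W₂ = V₂) ∨ (W₁ = V₂ ∧ W₂ = V₁))
    (L : (Fin n → ℝ) → ℝ)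
    (hL : ∀ θ : Fin n → ℝ,
      L θ = ∑ i : Fin n, ∑ j : Fin n, if i < j then a i j * g (θ i - θ j) else 0)
    (θ : Fin n → ℝ)
    (hmin : ∀ θ' : Fin n → ℝ, L θ ≤ L θ') :
    (∀ i j : Fin n, ∃ k : ℤ, θ i - θ j = k * Real.pi)
    ∧ (({i : Fin n | ∃ k : ℤ, θ i - θ ⟨0, hn⟩ = 2 * Real.pi * k} = (V₁ : Set (Fin n))
          ∧ {i : Fin n | ∃ k : ℤ, θ i - θ ⟨0, hn⟩ - Real.pi = 2 * Real.pi * k}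
              = (V₂ : Set (Fin n)))
        ∨ ({i : Fin n | ∃ k : ℤ, θ i - θ ⟨0, hn⟩ = 2 * Real.pi * k} = (V₂ : Set (Fin n))
          ∧ {i : Fin n | ∃ k : ℤ, θ i - θ ⟨0, hn⟩ - Real.pi = 2 * Real.pi * k}
              = (V₁ : Set (Fin n)))) := by
  classical
  have hpi := Real.pi_pos
  have hV₂ : V₂ = V₁ᶜ := by
    ext i
    have h1 : i ∈ V₁ ∪ V₂ := by rw [hcover]; exact Finset.mem_univ i
    rw [Finset.mem_union] at h1
    rw [Finset.mem_compl]
    constructor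
    · intro h2 h3
      exact Finset.disjoint_left.1 hdisj h3 h2
    · intro h2
      exact h1.resolve_left h2
  have hcut : ∀ W : Finset (Fin n), cutval W Wᶜ = ∑ i : Fin n, ∑ j : Fin n,
      if i < j then a i j * (if (i ∈ W ↔ j ∈ W) then (0:ℝ) else 1) else 0 := by
    intro W
    rw [hcutval]
    refine Finset.sum_congr rfl fun i _ => Finset.sum_congr rfl fun j _ => ?_
    by_cases hij : i < j <;> by_cases hi : i ∈ W <;> by_cases hj : j ∈ W <;> simp [hij, hi, hj]
  have hg0 : g 0 = 1 := by
    have h1 := hratio 0 ⟨le_refl _, hpi.le⟩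
    have h2 := (hbd 0).2
    simp at h1
    linarith
  -- energy of the binarized configuration
  have hLbin : L (fun i => if i ∈ V₁ then 0 else π) =
      (∑ i : Fin n, ∑ j : Fin n, if i < j then a i j else 0) - 2 * cutval V₁ V₂ := by
    rw [hV₂, hcut, hL, Finset.mul_sum, ← Finset.sum_sub_distrib]
    refine Finset.sum_congr rfl fun i _ => ?_
    rw [Finset.mul_sum, ← Finset.sum_sub_distrib]
    refine Finset.sum_congr rfl fun j _ => ?_
    by_cases hij : i < j <;> by_cases hi : i ∈ V₁ <;> by_cases hj : j ∈ V₁ <;>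
      simp [hij, hi, hj, hg0, heven, hgpi] <;> ring
  choose k r hr hθ using fun i => aux_exists_rep (θ i)
  let W : ℝ → Finset (Fin n) := fun t => Finset.univ.filter fun i => (Even (k i) ↔ t ≤ r i)
  have hWmem : ∀ t i, i ∈ W t ↔ (Even (k i) ↔ t ≤ r i) := by
    intro t i; simp [W]
  let f : Fin n → Fin n → ℝ → ℝ := fun i j t =>
    if ((Even (k i) ↔ t ≤ r i) ↔ (Even (k j) ↔ t ≤ r j)) then (0:ℝ) else 1
  let C : ℝ → ℝ := fun t => ∑ i : Fin n, ∑ j : Fin n, if i < j then a i j * f i j t else 0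
  have hC : ∀ t, cutval (W t) (W t)ᶜ = C t := by
    intro t
    rw [hcut]
    simp only [hWmem]
    rfl
  let d : Fin n → Fin n → ℝ := fun i j =>
    if (Even (k i) ↔ Even (k j)) then |r i - r j| else π - |r i - r j|
  let μ : MeasureTheory.Measure ℝ := MeasureTheory.volume.restrict (Set.Ioc 0 π)
  have hfint : ∀ i j, MeasureTheory.Integrable (f i j) μ := fun i j => aux_integrable _ _ _ _
  have hfval : ∀ i j, ∫ t, f i j t ∂μ = d i j :=
    fun i j => aux_integral _ _ _ _ (hr i) (hr j)
  have htermint : ∀ i j : Fin n,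
      MeasureTheory.Integrable (fun t => if i < j then a i j * f i j t else 0) μ := by
    intro i j
    by_cases hij : i < j
    · simp only [hij, if_true]
      exact (hfint i j).const_mul _
    · simp only [hij, if_false]
      exact MeasureTheory.integrable_zero _ _ _
  have hCint : MeasureTheory.Integrable C μ :=
    MeasureTheory.integrable_finsetSum _ fun i _ =>
      MeasureTheory.integrable_finsetSum _ fun j _ => htermint i j
  have hCval : ∫ t, C t ∂μ = ∑ i : Fin n, ∑ j : Fin n, if i < j then a i j * d i j else 0 := by
    rw [MeasureTheory.integral_finsetSum _ fun i _ =>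
      MeasureTheory.integrable_finsetSum _ fun j _ => htermint i j]
    refine Finset.sum_congr rfl fun i _ => ?_
    rw [MeasureTheory.integral_finsetSum _ fun j _ => htermint i j]
    refine Finset.sum_congr rfl fun j _ => ?_
    by_cases hij : i < j
    · simp only [hij, if_true]
      rw [MeasureTheory.integral_const_mul, hfval]
    · simp [hij]
  have hCle : ∀ t, C t ≤ cutval V₁ V₂ := by
    intro t
    rw [← hC]
    exact hmax _ _ (Finset.union_compl _) disjoint_compl_right
  have hlow : π * ((∑ i : Fin n, ∑ j : Fin n, if i < j then a i j else 0) - L θ) ≤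
      2 * ∫ t, C t ∂μ := by
    rw [hCval, hL, ← Finset.sum_sub_distrib, Finset.mul_sum, Finset.mul_sum]
    refine Finset.sum_le_sum fun i _ => ?_
    rw [← Finset.sum_sub_distrib, Finset.mul_sum, Finset.mul_sum]
    refine Finset.sum_le_sum fun j _ => ?_
    by_cases hij : i < j
    · simp only [hij, if_true]
      have h1 := aux_g g heven hper hratio (k i) (k j) (r i) (r j) (hr i) (hr j)
      rw [← hθ i, ← hθ j] at h1
      rcases h01 i j with h | h
      · simp [h]
      · rw [h]
        simp only [one_mul]
        exact h1
    · simp [hij]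
  have hμ : ∫ _t, cutval V₁ V₂ ∂μ = π * cutval V₁ V₂ := by
    simp [μ, MeasureTheory.measureReal_def, hpi.le]
  have hmain : ∫ _t, cutval V₁ V₂ ∂μ ≤ ∫ t, C t ∂μ := by
    rw [hμ]
    have h1 := hmin (fun i => if i ∈ V₁ then 0 else π)
    rw [hLbin] at h1
    nlinarith [mul_le_mul_of_nonneg_left h1 hpi.le]
  have hae : ∀ᵐ t ∂μ, C t = cutval V₁ V₂ := by
    have hconst : MeasureTheory.Integrable (fun _ : ℝ => cutval V₁ V₂) μ :=
      MeasureTheory.integrable_const _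
    have h0 : ∫ t, (cutval V₁ V₂ - C t) ∂μ = 0 := by
      apply le_antisymm
      · rw [MeasureTheory.integral_sub hconst hCint]
        linarith
      · exact MeasureTheory.integral_nonneg fun t => sub_nonneg.2 (hCle t)
    rw [MeasureTheory.integral_eq_zero_iff_of_nonneg (fun t => sub_nonneg.2 (hCle t))
      (hconst.sub hCint)] at h0
    filter_upwards [h0] with t ht
    simp only [Pi.zero_apply] at ht
    linarith
  have hgood : ∀ᵐ t ∂μ, W t = V₁ ∨ W t = V₂ := by
    filter_upwards [hae] with t ht
    rcases huniq (W t) (W t)ᶜ (Finset.union_compl _) disjoint_compl_right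
      (by rw [hC, ht]) with h | h
    · exact Or.inl h.1
    · exact Or.inr h.1
  have hsep : ∀ t, (W t = V₁ ∨ W t = V₂) → ∀ i j,
      f i j t = if (i ∈ V₁ ↔ j ∈ V₁) then (0:ℝ) else 1 := by
    intro t ht i j
    have e : f i j t = if (i ∈ W t ↔ j ∈ W t) then (0:ℝ) else 1 := by
      simp only [hWmem]; rfl
    rw [e]
    rcases ht with ht | ht
    · rw [ht]
    · rw [ht, hV₂]
      simp only [Finset.mem_compl, not_iff_not]
  have hd : ∀ i j, d i j = if (i ∈ V₁ ↔ j ∈ V₁) then (0:ℝ) else π := by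
    intro i j
    rw [← hfval]
    have : ∫ t, f i j t ∂μ = ∫ _t, (if (i ∈ V₁ ↔ j ∈ V₁) then (0:ℝ) else 1) ∂μ := by
      apply MeasureTheory.integral_congr_ae
      filter_upwards [hgood] with t ht
      exact hsep t ht i j
    rw [this]
    by_cases h : (i ∈ V₁ ↔ j ∈ V₁)
    · simp [h]
    · simp [h, μ, MeasureTheory.measureReal_def, hpi.le]
  have hfin : ∀ i j, r i = r j ∧ ((Even (k i) ↔ Even (k j)) ↔ (i ∈ V₁ ↔ j ∈ V₁)) := by
    intro i j
    have h := hd i j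
    have habs : |r i - r j| < π := by
      obtain ⟨h1, h2⟩ := hr i
      obtain ⟨h3, h4⟩ := hr j
      rw [abs_lt]; constructor <;> linarith
    have hz : |r i - r j| = 0 → r i = r j := fun h => sub_eq_zero.1 (abs_eq_zero.1 h)
    simp only [d] at h
    by_cases h1 : (Even (k i) ↔ Even (k j)) <;> by_cases h2 : (i ∈ V₁ ↔ j ∈ V₁)
    · rw [if_pos h1, if_pos h2] at h
      exact ⟨hz h, by tauto⟩
    · rw [if_pos h1, if_neg h2] at h
      linarith
    · rw [if_neg h1, if_pos h2] at h
      linarith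
    · rw [if_neg h1, if_neg h2] at h
      exact ⟨hz (by linarith), by tauto⟩
  have hdiff : ∀ i j, θ i - θ j = k i * π - k j * π := by
    intro i j
    rw [hθ i, hθ j, (hfin i j).1]
    ring
  refine ⟨fun i j => ⟨k i - k j, ?_⟩, ?_⟩
  · rw [hdiff]; push_cast; ring
  · simp only [hdiff, aux_parity, (hfin _ _).2, hV₂]
    by_cases h0 : (⟨0, hn⟩ : Fin n) ∈ V₁
    · left
      constructor <;> ext i <;> simp [h0]
    · right
      constructor <;> ext i <;> simp [h0]
end
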